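/- Let s and t be real numbers with α = min{s, t}, and define Δ_{s,t}(x) = ((ψ(x+t) - ψ(x+s))/(t-s))² + (ψ'(x+t) - ψ'(x+s))/(t-s) when s ≠ t, and Δ_{s,s}(x) = (ψ'(x+s))² + ψ''(x+s), for x ∈ (-α, ∞). Then Δ_{s,t} is completely monotonic on (-α, ∞) whenever |t - s| < 1 (including s = t), and -Δ_{s,t} is completely monotonic on (-α, ∞) whenever |t - s| > 1. -/

import Mathlib

open Real

/-- The digamma (psi) function, the derivative of `log ∘ Γ`. -/
noncomputable def digamma : ℝ → ℝ :=
  deriv fun x : ℝ => Real.log (Real.Gamma x)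

/-- A function `f` is completely monotonic on a set `S` if it has derivatives of all
orders on `S` and `(-1)^n f⁽ⁿ⁾(x) ≥ 0` for all `x ∈ S` and `n ≥ 0`. -/
def CompletelyMonotonicOn (f : ℝ → ℝ) (S : Set ℝ) : Prop :=
  (∀ x ∈ S, ContDiffAt ℝ (⊤ : ℕ∞) f x) ∧ ∀ (n : ℕ), ∀ x ∈ S, 0 ≤ (-1 : ℝ) ^ n * iteratedDeriv n f x

/-- The function `Δ_{s,t}` built from divided differences of the digamma and trigamma
functions. -/
noncomputable def Delta (s t : ℝ) : ℝ → ℝ := fun x =>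
  if s = t then (deriv digamma (x + s)) ^ 2 + deriv (deriv digamma) (x + s)
  else ((digamma (x + t) - digamma (x + s)) / (t - s)) ^ 2 +
    (deriv digamma (x + t) - deriv digamma (x + s)) / (t - s)

open Set Filter Topology

namespace CompletelyMonotonicOn

variable {f g : ℝ → ℝ} {S : Set ℝ}

lemma congr (hS : IsOpen S) (hf : CompletelyMonotonicOn f S) (h : EqOn g f S) :
    CompletelyMonotonicOn g S := by
  have h' : ∀ x ∈ S, g =ᶠ[𝓝 x] f := fun x hx => h.eventuallyEq_of_mem (hS.mem_nhds hx)
  refine ⟨fun x hx => (hf.1 x hx).congr_of_eventuallyEq (h' x hx), fun n x hx => ?_⟩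
  rw [(h' x hx).iteratedDeriv_eq]
  exact hf.2 n x hx

lemma mul (hf : CompletelyMonotonicOn f S) (hg : CompletelyMonotonicOn g S) :
    CompletelyMonotonicOn (fun x => f x * g x) S := by
  refine ⟨fun x hx => (hf.1 x hx).mul (hg.1 x hx), fun n x hx => ?_⟩
  rw [iteratedDeriv_fun_mul (contDiffAt_infty.1 (hf.1 x hx) n) (contDiffAt_infty.1 (hg.1 x hx) n),
    Finset.mul_sum]
  refine Finset.sum_nonneg fun i hi => ?_
  have hin : i + (n - i) = n := by have := Finset.mem_range.1 hi; omega
  have hsign : (-1 : ℝ) ^ n = (-1) ^ i * (-1) ^ (n - i) := by rw [← pow_add, hin]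
  have key := mul_nonneg (mul_nonneg (Nat.cast_nonneg (α := ℝ) (n.choose i)) (hf.2 i x hx))
    (hg.2 (n - i) x hx)
  rw [hsign]
  linarith

lemma const_mul {c : ℝ} (hc : 0 ≤ c) (hf : CompletelyMonotonicOn f S) :
    CompletelyMonotonicOn (fun x => c * f x) S := by
  refine ⟨fun x hx => contDiffAt_const.mul (hf.1 x hx), fun n x hx => ?_⟩
  rw [iteratedDeriv_const_mul_field]
  have := mul_nonneg hc (hf.2 n x hx)
  linarith

lemma comp_add_const {c : ℝ} (hf : CompletelyMonotonicOn f (Ioi 0)) :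
    CompletelyMonotonicOn (fun x => f (x + c)) (Ioi (-c)) := by
  have hmem : ∀ x ∈ Ioi (-c), x + c ∈ Ioi (0 : ℝ) := fun x hx => by
    have := mem_Ioi.1 hx
    exact mem_Ioi.2 (by linarith)
  refine ⟨fun x hx => ?_, fun n x hx => ?_⟩
  · exact ContDiffAt.comp x (hf.1 _ (hmem x hx)) (contDiffAt_id.add contDiffAt_const)
  · rw [iteratedDeriv_comp_add_const]
    exact hf.2 n _ (hmem x hx)

end CompletelyMonotonicOn

/-- A family in which each function is the derivative of the previous one on `(0, ∞)` lists the
iterated derivatives of its first member. -/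
lemma iteratedDeriv_eq_of_hasDerivAt_succ {F : ℕ → ℝ → ℝ}
    (hF : ∀ n, ∀ x ∈ Ioi (0 : ℝ), HasDerivAt (F n) (F (n + 1) x) x) (n : ℕ) :
    EqOn (iteratedDeriv n (F 0)) (F n) (Ioi 0) := by
  induction n with
  | zero => intro x _; simp
  | succ n ih =>
    intro x hx
    rw [iteratedDeriv_succ, (ih.eventuallyEq_of_mem (isOpen_Ioi.mem_nhds hx)).deriv_eq]
    exact (hF n x hx).deriv

lemma contDiffAt_of_hasDerivAt_succ {F : ℕ → ℝ → ℝ}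
    (hF : ∀ n, ∀ x ∈ Ioi (0 : ℝ), HasDerivAt (F n) (F (n + 1) x) x) {x : ℝ} (hx : x ∈ Ioi 0) :
    ContDiffAt ℝ (⊤ : ℕ∞) (F 0) x := by
  refine (contDiffOn_of_differentiableOn_deriv fun m _ => ?_).contDiffAt (isOpen_Ioi.mem_nhds hx)
  have h : EqOn (iteratedDerivWithin m (F 0) (Ioi 0)) (F m) (Ioi 0) :=
    (iteratedDerivWithin_of_isOpen isOpen_Ioi).trans (iteratedDeriv_eq_of_hasDerivAt_succ hF m)
  exact DifferentiableOn.congr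
    (fun y hy => (hF m y hy).differentiableAt.differentiableWithinAt) h

/-- Smooth functions on `(0, ∞)` all of whose derivatives vanish at infinity. -/
structure SmoothVanishing (f : ℝ → ℝ) : Prop where
  contDiffAt : ∀ x ∈ Ioi (0 : ℝ), ContDiffAt ℝ (⊤ : ℕ∞) f x
  tendsto : ∀ n, Tendsto (iteratedDeriv n f) atTop (𝓝 0)

namespace SmoothVanishing

variable {f g : ℝ → ℝ}

lemma of_hasDerivAt_succ {F : ℕ → ℝ → ℝ}
    (hF : ∀ n, ∀ x ∈ Ioi (0 : ℝ), HasDerivAt (F n) (F (n + 1) x) x)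
    (hlim : ∀ n, Tendsto (F n) atTop (𝓝 0)) : SmoothVanishing (F 0) where
  contDiffAt _ hx := contDiffAt_of_hasDerivAt_succ hF hx
  tendsto n := (hlim n).congr' <| (eventually_gt_atTop 0).mono fun _ hx =>
    (iteratedDeriv_eq_of_hasDerivAt_succ hF n hx).symm

lemma add (hf : SmoothVanishing f) (hg : SmoothVanishing g) :
    SmoothVanishing fun x => f x + g x where
  contDiffAt x hx := (hf.contDiffAt x hx).add (hg.contDiffAt x hx)
  tendsto n := by
    have h := (hf.tendsto n).add (hg.tendsto n)
    rw [add_zero] at h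
    refine h.congr' <| (eventually_gt_atTop 0).mono fun x hx => ?_
    exact (iteratedDeriv_fun_add (contDiffAt_infty.1 (hf.contDiffAt x hx) n)
      (contDiffAt_infty.1 (hg.contDiffAt x hx) n)).symm

lemma const_mul (c : ℝ) (hf : SmoothVanishing f) : SmoothVanishing fun x => c * f x where
  contDiffAt x hx := contDiffAt_const.mul (hf.contDiffAt x hx)
  tendsto n := by
    have h := (hf.tendsto n).const_mul c
    rw [mul_zero] at h
    exact h.congr fun x => (iteratedDeriv_const_mul_field c f).symm

lemma mul (hf : SmoothVanishing f) (hg : SmoothVanishing g) :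
    SmoothVanishing fun x => f x * g x where
  contDiffAt x hx := (hf.contDiffAt x hx).mul (hg.contDiffAt x hx)
  tendsto n := by
    have h : Tendsto (fun x => ∑ i ∈ Finset.range (n + 1),
        (n.choose i : ℝ) * iteratedDeriv i f x * iteratedDeriv (n - i) g x) atTop
        (𝓝 (∑ i ∈ Finset.range (n + 1), (n.choose i : ℝ) * 0 * 0)) :=
      tendsto_finsetSum _ fun i _ => ((hf.tendsto i).const_mul _).mul (hg.tendsto (n - i))
    simp only [mul_zero, Finset.sum_const_zero] at h
    refine h.congr' <| (eventually_gt_atTop 0).mono fun x hx => ?_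
    exact (iteratedDeriv_fun_mul (contDiffAt_infty.1 (hf.contDiffAt x hx) n)
      (contDiffAt_infty.1 (hg.contDiffAt x hx) n)).symm

lemma deriv (hf : SmoothVanishing f) : SmoothVanishing (deriv f) where
  contDiffAt x hx := (hf.contDiffAt x hx).derivWithin le_rfl
  tendsto n := by
    rw [← iteratedDeriv_succ']
    exact hf.tendsto (n + 1)

/-- A function vanishing at infinity with all its derivatives is completely monotonic as soon as
its backward unit difference is. -/
lemma completelyMonotonicOn (hf : SmoothVanishing f) (hg : CompletelyMonotonicOn g (Ioi 0))
    (h : ∀ x ∈ Ioi (0 : ℝ), f x - f (x + 1) = g x) : CompletelyMonotonicOn f (Ioi 0) := by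
  refine ⟨hf.contDiffAt, fun n x hx => ?_⟩
  have step : ∀ y ∈ Ioi (0 : ℝ),
      (-1) ^ n * iteratedDeriv n f (y + 1) ≤ (-1) ^ n * iteratedDeriv n f y := by
    intro y hy
    have hy1 : y + 1 ∈ Ioi (0 : ℝ) := by have := mem_Ioi.1 hy; exact mem_Ioi.2 (by linarith)
    have hshift : ContDiffAt ℝ (n : ℕ∞) (fun z => f (z + 1)) y :=
      ContDiffAt.comp y (contDiffAt_infty.1 (hf.contDiffAt _ hy1) n)
        (contDiffAt_id.add contDiffAt_const)
    have hEq : g =ᶠ[𝓝 y] fun z => f z - f (z + 1) :=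
      EqOn.eventuallyEq_of_mem (fun z hz => (h z hz).symm) (isOpen_Ioi.mem_nhds hy)
    have hnonneg := hg.2 n y hy
    rw [hEq.iteratedDeriv_eq,
      iteratedDeriv_fun_sub (contDiffAt_infty.1 (hf.contDiffAt y hy) n) hshift,
      iteratedDeriv_comp_add_const] at hnonneg
    linarith
  have hanti : ∀ k : ℕ,
      (-1) ^ n * iteratedDeriv n f (x + k) ≤ (-1) ^ n * iteratedDeriv n f x := by
    intro k
    induction k with
    | zero => simp
    | succ k ih =>
      refine le_trans ?_ ih
      have := step (x + k) (mem_Ioi.2 (by have := mem_Ioi.1 hx; positivity))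
      rwa [add_assoc, ← Nat.cast_succ] at this
  have hlim := ((hf.tendsto n).comp
    (tendsto_atTop_add_const_left atTop x tendsto_natCast_atTop_atTop)).const_mul ((-1 : ℝ) ^ n)
  rw [mul_zero] at hlim
  exact le_of_tendsto' hlim hanti

end SmoothVanishing

section InvAdd

variable {c : ℝ}

lemma hasDerivAt_inv_add_pow (p : ℕ) {x : ℝ} (hx : x + c ≠ 0) :
    HasDerivAt (fun y : ℝ => ((y + c) ^ p)⁻¹) (-p * ((x + c) ^ (p + 1))⁻¹) x := by
  have h := (((hasDerivAt_id x).add_const c).pow p).inv (pow_ne_zero p hx)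
  refine h.congr_deriv ?_
  cases p with
  | zero => simp
  | succ p =>
    simp only [id, Nat.add_sub_cancel, Pi.pow_apply]
    field_simp
    ring

lemma hasDerivAt_inv_add_succ (hc : 0 ≤ c) (n : ℕ) (x : ℝ) (hx : x ∈ Ioi 0) :
    HasDerivAt (fun y => (-1 : ℝ) ^ n * n.factorial * ((y + c) ^ (n + 1))⁻¹)
      ((-1 : ℝ) ^ (n + 1) * (n + 1).factorial * ((x + c) ^ (n + 1 + 1))⁻¹) x := by
  have hx' : x + c ≠ 0 := by have := mem_Ioi.1 hx; positivity
  refine ((hasDerivAt_inv_add_pow (n + 1) hx').const_mul _).congr_deriv ?_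
  push_cast [Nat.factorial_succ]
  ring

lemma smoothVanishing_inv_add (hc : 0 ≤ c) : SmoothVanishing fun x => (x + c)⁻¹ := by
  have h := SmoothVanishing.of_hasDerivAt_succ (hasDerivAt_inv_add_succ hc) fun n => by
    have h1 : Tendsto (fun x : ℝ => (x + c) ^ (n + 1)) atTop atTop :=
      (tendsto_pow_atTop n.succ_ne_zero).comp (tendsto_atTop_add_const_right atTop c tendsto_id)
    simpa using h1.inv_tendsto_atTop.const_mul ((-1 : ℝ) ^ n * n.factorial)
  simpa using h

lemma completelyMonotonicOn_inv_add (hc : 0 ≤ c) :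
    CompletelyMonotonicOn (fun x => (x + c)⁻¹) (Ioi 0) := by
  refine ⟨(smoothVanishing_inv_add hc).contDiffAt, fun n x hx => ?_⟩
  have h := iteratedDeriv_eq_of_hasDerivAt_succ (hasDerivAt_inv_add_succ hc) n hx
  simp only [pow_zero, Nat.factorial_zero, Nat.cast_one, mul_one, one_mul, zero_add, pow_one] at h
  have hx' : 0 < x + c := by have := mem_Ioi.1 hx; positivity
  rw [h, ← mul_assoc, ← mul_assoc, ← mul_pow]
  norm_num
  positivity

end InvAdd

/-- The complete monotonicity of `±(δ² + δ')` follows from the difference equation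
`δ(x + 1) = δ(x) - 1 / (x (x + a))`; the sign is that of `1 - a²`. -/
lemma completelyMonotonicOn_sq_add_deriv {δ : ℝ → ℝ} {a ε : ℝ} (ha : 0 ≤ a)
    (hε : 0 ≤ ε * (1 - a ^ 2)) (hδ : SmoothVanishing δ)
    (hrec : ∀ x ∈ Ioi (0 : ℝ), δ (x + 1) = δ x - x⁻¹ * (x + a)⁻¹) :
    CompletelyMonotonicOn (fun x => ε * (δ x ^ 2 + deriv δ x)) (Ioi 0) := by
  have inv_x : SmoothVanishing fun x => x⁻¹ := by simpa using smoothVanishing_inv_add le_rfl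
  have inv_x_cm : CompletelyMonotonicOn (fun x => x⁻¹) (Ioi 0) := by
    simpa using completelyMonotonicOn_inv_add le_rfl
  have inv_a := smoothVanishing_inv_add ha
  have inv_a_cm := completelyMonotonicOn_inv_add ha
  have hG : CompletelyMonotonicOn
      (fun x => ε * (2 * δ x + -1 * (x⁻¹ + (x + a)⁻¹ + x⁻¹ * (x + a)⁻¹))) (Ioi 0) := by
    refine SmoothVanishing.completelyMonotonicOn
      (((hδ.const_mul 2).add (((inv_x.add inv_a).add (inv_x.mul inv_a)).const_mul (-1))).const_mul ε)
      ((((inv_x_cm.mul (completelyMonotonicOn_inv_add zero_le_one)).mul inv_a_cm).mul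
        (completelyMonotonicOn_inv_add (add_nonneg ha zero_le_one))).const_mul hε) fun x hx => ?_
    have hx0 : 0 < x := hx
    have h1 : x + a ≠ 0 := by positivity
    have h2 : x + 1 ≠ 0 := by positivity
    have h3 : x + 1 + a ≠ 0 := by positivity
    have h4 : x + (a + 1) = x + 1 + a := by ring
    rw [hrec x hx, h4]
    field_simp
    ring
  refine SmoothVanishing.completelyMonotonicOn ?_ ((inv_x_cm.mul inv_a_cm).mul hG) fun x hx => ?_
  · simpa only [sq] using ((hδ.mul hδ).add hδ.deriv).const_mul ε
  have hx0 : 0 < x := hx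
  have h1 : x + a ≠ 0 := by positivity
  have hderiv : deriv δ (x + 1) =
      deriv δ x + x⁻¹ * (x + a)⁻¹ * (x⁻¹ + (x + a)⁻¹) := by
    have hEq : (fun y => δ (y + 1)) =ᶠ[𝓝 x] fun y => δ y - y⁻¹ * (y + a)⁻¹ :=
      EqOn.eventuallyEq_of_mem hrec (isOpen_Ioi.mem_nhds hx)
    have hδ' : HasDerivAt δ (deriv δ x) x :=
      ((hδ.contDiffAt x hx).differentiableAt (by simp)).hasDerivAt
    have hd := hδ'.sub ((hasDerivAt_inv hx0.ne').mul (((hasDerivAt_id x).add_const a).inv h1))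
    rw [← deriv_comp_add_const, hEq.deriv_eq]
    refine HasDerivAt.deriv (hd.congr_deriv ?_)
    simp only [id, Pi.inv_apply]
    field_simp
    ring
  rw [hderiv, hrec x hx]
  ring

section Digamma

lemma hasDerivAt_log_Gamma {x : ℝ} (hx : x ∈ Ioi 0) :
    HasDerivAt (fun y => Real.log (Real.Gamma y)) (digamma x) x := by
  have hx0 : 0 < x := hx
  exact DifferentiableAt.hasDerivAt <|
    (Real.differentiableOn_Gamma_Ioi.differentiableAt (isOpen_Ioi.mem_nhds hx)).log
      (Real.Gamma_pos_of_pos hx0).ne'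

lemma monotoneOn_digamma : MonotoneOn digamma (Ioi 0) :=
  Real.convexOn_log_Gamma.monotoneOn_deriv fun _ hx => (hasDerivAt_log_Gamma hx).differentiableAt

lemma digamma_add_one {x : ℝ} (hx : x ∈ Ioi 0) : digamma (x + 1) = digamma x + x⁻¹ := by
  have hx0 : 0 < x := hx
  have hEq : (fun y => Real.log (Real.Gamma (y + 1))) =ᶠ[𝓝 x]
      fun y => Real.log (Real.Gamma y) + Real.log y := by
    refine EqOn.eventuallyEq_of_mem (fun y hy => ?_) (isOpen_Ioi.mem_nhds hx)
    have hy0 : 0 < y := hy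
    rw [Real.Gamma_add_one hy0.ne', Real.log_mul hy0.ne' (Real.Gamma_pos_of_pos hy0).ne', add_comm]
  have h := ((hasDerivAt_log_Gamma hx).add (Real.hasDerivAt_log hx0.ne')).deriv
  rw [← h, digamma, ← deriv_comp_add_const]
  exact hEq.deriv_eq

lemma digamma_add_nat {x : ℝ} (hx : x ∈ Ioi 0) (n : ℕ) :
    digamma (x + n) = digamma x + ∑ k ∈ Finset.range n, (x + k)⁻¹ := by
  have hx0 : 0 < x := hx
  induction n with
  | zero => simp
  | succ n ih =>
    rw [Finset.sum_range_succ, ← add_assoc, ← ih, Nat.cast_succ, ← add_assoc,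
      digamma_add_one (mem_Ioi.2 (by positivity))]

lemma tendsto_digamma_add_sub {a : ℝ} (ha : 0 ≤ a) :
    Tendsto (fun x => digamma (x + a) - digamma x) atTop (𝓝 0) := by
  have hlim : Tendsto (fun x : ℝ => ⌈a⌉₊ * x⁻¹) atTop (𝓝 0) := by
    simpa using tendsto_inv_atTop_zero.const_mul (⌈a⌉₊ : ℝ)
  refine squeeze_zero' ?_ ?_ hlim
  · filter_upwards [eventually_gt_atTop 0] with x hx
    exact sub_nonneg.2 (monotoneOn_digamma hx (mem_Ioi.2 (by positivity)) (by linarith))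
  · filter_upwards [eventually_gt_atTop 0] with x hx
    have h1 : digamma (x + a) ≤ digamma (x + ⌈a⌉₊) :=
      monotoneOn_digamma (mem_Ioi.2 (by positivity)) (mem_Ioi.2 (by positivity))
        (by linarith [Nat.le_ceil a])
    have h2 : ∑ k ∈ Finset.range ⌈a⌉₊, (x + k)⁻¹ ≤ ∑ k ∈ Finset.range ⌈a⌉₊, x⁻¹ :=
      Finset.sum_le_sum fun k _ => inv_anti₀ hx (by linarith [Nat.cast_nonneg (α := ℝ) k])
    rw [Finset.sum_const, Finset.card_range, nsmul_eq_mul] at h2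
    linarith [digamma_add_nat hx ⌈a⌉₊]

lemma summable_inv_add_pow {x : ℝ} (hx : 0 < x) {p : ℕ} (hp : 2 ≤ p) :
    Summable fun k : ℕ => ((x + k) ^ p)⁻¹ := by
  refine ((Real.summable_one_div_nat_add_rpow x p).2 (by exact_mod_cast hp)).congr fun k => ?_
  rw [Real.rpow_natCast, abs_of_nonneg (by positivity), one_div, add_comm]

/-- The Hurwitz zeta function `∑ k, 1 / (x + k) ^ p` at integer exponents. -/
noncomputable def hurwitzSum (p : ℕ) (x : ℝ) : ℝ := ∑' k : ℕ, ((x + k) ^ p)⁻¹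

lemma norm_neg_mul_inv_add_pow_le {ε x : ℝ} (hε : 0 < ε) (hx : x ∈ Ioi ε) (c p k : ℕ) :
    ‖-(c : ℝ) * ((x + k) ^ p)⁻¹‖ ≤ c * ((ε + k) ^ p)⁻¹ := by
  have hx' : ε < x := hx
  have hx0 : 0 < x := hε.trans hx'
  rw [norm_mul, norm_neg, Real.norm_natCast, Real.norm_of_nonneg (by positivity)]
  gcongr

lemma hasDerivAt_hurwitzSum {p : ℕ} (hp : 2 ≤ p) {x : ℝ} (hx : x ∈ Ioi 0) :
    HasDerivAt (hurwitzSum p) (-p * hurwitzSum (p + 1) x) x := by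
  have hx0 : 0 < x := hx
  rw [hurwitzSum, ← tsum_mul_left]
  have hmem : x ∈ Ioi (x / 2) := mem_Ioi.2 (by linarith)
  refine hasDerivAt_tsum_of_isPreconnected
    ((summable_inv_add_pow (half_pos hx0) (hp.trans p.le_succ)).mul_left (p : ℝ))
    isOpen_Ioi isPreconnected_Ioi (fun k y hy => hasDerivAt_inv_add_pow p ?_)
    (fun k y hy => norm_neg_mul_inv_add_pow_le (half_pos hx0) hy p (p + 1) k)
    hmem (summable_inv_add_pow hx0 hp) hmem
  have : 0 < y := (half_pos hx0).trans hy
  positivity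

lemma tendsto_hurwitzSum {p : ℕ} (hp : 2 ≤ p) : Tendsto (hurwitzSum p) atTop (𝓝 0) := by
  have h := tendsto_tsum_of_dominated_convergence (f := fun (x : ℝ) (k : ℕ) => ((x + k) ^ p)⁻¹)
    (g := fun _ => 0) (𝓕 := atTop) (summable_inv_add_pow one_pos hp) (fun k => ?_) ?_
  · rw [tsum_zero] at h
    exact h
  · exact ((tendsto_pow_atTop (by omega)).comp
      (tendsto_atTop_add_const_right atTop (k : ℝ) tendsto_id)).inv_tendsto_atTop
  · filter_upwards [eventually_ge_atTop 1] with x hx k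
    rw [Real.norm_of_nonneg (by positivity)]
    gcongr

lemma hasDerivAt_digamma {x : ℝ} (hx : x ∈ Ioi 0) : HasDerivAt digamma (hurwitzSum 2 x) x := by
  have hx0 : 0 < x := hx
  set ε := min x 1 / 2 with hε_def
  have hε : 0 < ε := by positivity
  have hεx : x ∈ Ioi ε := mem_Ioi.2 (by have := min_le_left x 1; linarith)
  have hε1 : (1 : ℝ) ∈ Ioi ε := mem_Ioi.2 (by have := min_le_right x 1; linarith)
  have hu := summable_inv_add_pow hε le_rfl
  have hpos : ∀ y ∈ Ioi ε, 0 < y := fun y hy => hε.trans hy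
  have hg : ∀ (k : ℕ), ∀ y ∈ Ioi ε,
      HasDerivAt (fun z : ℝ => (1 + k : ℝ)⁻¹ - (z + k)⁻¹) ((y + k) ^ 2)⁻¹ y := by
    intro k y hy
    have hy0 := hpos y hy
    simpa using (hasDerivAt_inv_add_pow (c := k) 1 (x := y) (by positivity)).const_sub (1 + k : ℝ)⁻¹
  have hg' : ∀ (k : ℕ), ∀ y ∈ Ioi ε, ‖((y + k) ^ 2)⁻¹‖ ≤ ((ε + k) ^ 2)⁻¹ := by
    intro k y hy
    simpa using norm_neg_mul_inv_add_pow_le hε hy 1 2 k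
  have h1 : Summable fun k : ℕ => (1 + k : ℝ)⁻¹ - (1 + k : ℝ)⁻¹ := by simp [summable_zero]
  have hseries : ∀ y ∈ Ioi ε,
      digamma y = digamma 1 + ∑' k : ℕ, ((1 + k : ℝ)⁻¹ - (y + k)⁻¹) := by
    intro y hy
    have hy0 := hpos y hy
    have hsum : Summable fun k : ℕ => (1 + k : ℝ)⁻¹ - (y + k)⁻¹ :=
      summable_of_summable_hasDerivAt_of_isPreconnected hu isOpen_Ioi isPreconnected_Ioi hg hg'
        hε1 h1 hy
    have hdiff : Tendsto (fun n : ℕ => digamma (y + n) - digamma (1 + n)) atTop (𝓝 0) := by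
      have key : ∀ b : ℝ, 0 < b →
          Tendsto (fun n : ℕ => digamma (b + n) - digamma n) atTop (𝓝 0) := fun b hb => by
        simpa [Function.comp_def, add_comm] using
          (tendsto_digamma_add_sub hb.le).comp tendsto_natCast_atTop_atTop
      simpa using (key y hy0).sub (key 1 one_pos)
    have hlim : Tendsto (fun n : ℕ => ∑ k ∈ Finset.range n, ((1 + k : ℝ)⁻¹ - (y + k)⁻¹)) atTop
        (𝓝 (digamma y - digamma 1)) := by
      have := hdiff.const_sub (digamma y - digamma 1)
      rw [sub_zero] at this
      refine this.congr fun n => ?_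
      rw [digamma_add_nat (mem_Ioi.2 hy0), digamma_add_nat (mem_Ioi.2 one_pos),
        Finset.sum_sub_distrib]
      ring
    rw [(hsum.hasSum_iff_tendsto_nat.2 hlim).tsum_eq]
    ring
  have hderiv := (hasDerivAt_tsum_of_isPreconnected hu isOpen_Ioi isPreconnected_Ioi hg hg' hε1 h1
    hεx).const_add (digamma 1)
  exact hderiv.congr_of_eventuallyEq
    (EqOn.eventuallyEq_of_mem hseries (isOpen_Ioi.mem_nhds hεx))

/-- The polygamma functions, as series. -/
noncomputable def polygamma : ℕ → ℝ → ℝ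
  | 0 => digamma
  | n + 1 => fun x => (-1) ^ n * (n + 1).factorial * hurwitzSum (n + 2) x

lemma hasDerivAt_polygamma (n : ℕ) (x : ℝ) (hx : x ∈ Ioi 0) :
    HasDerivAt (polygamma n) (polygamma (n + 1) x) x := by
  cases n with
  | zero => simpa [polygamma] using hasDerivAt_digamma hx
  | succ n =>
    refine ((hasDerivAt_hurwitzSum (by omega : 2 ≤ n + 2) hx).const_mul _).congr_deriv ?_
    simp only [polygamma]
    push_cast [Nat.factorial_succ]
    ring

lemma tendsto_polygamma_succ (n : ℕ) : Tendsto (polygamma (n + 1)) atTop (𝓝 0) := by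
  simpa [polygamma] using
    (tendsto_hurwitzSum (by omega : 2 ≤ n + 2)).const_mul ((-1 : ℝ) ^ n * (n + 1).factorial)

lemma differentiableAt_digamma {x : ℝ} (hx : x ∈ Ioi 0) : DifferentiableAt ℝ digamma x :=
  (hasDerivAt_digamma hx).differentiableAt

lemma smoothVanishing_deriv_digamma : SmoothVanishing (deriv digamma) where
  contDiffAt _ hx :=
    (contDiffAt_of_hasDerivAt_succ hasDerivAt_polygamma hx).derivWithin le_rfl
  tendsto n := by
    rw [← iteratedDeriv_succ']
    exact (tendsto_polygamma_succ n).congr' <| (eventually_gt_atTop 0).mono fun _ hx =>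
      (iteratedDeriv_eq_of_hasDerivAt_succ hasDerivAt_polygamma (n + 1) hx).symm

lemma smoothVanishing_digamma_diff {a : ℝ} (ha : 0 ≤ a) :
    SmoothVanishing fun x => (digamma (x + a) - digamma x) / a := by
  refine SmoothVanishing.of_hasDerivAt_succ
    (F := fun n x => (polygamma n (x + a) - polygamma n x) / a) (fun n x hx => ?_) fun n => ?_
  · have hxa : x + a ∈ Ioi (0 : ℝ) := mem_Ioi.2 (by have := mem_Ioi.1 hx; positivity)
    exact (((hasDerivAt_polygamma n _ hxa).comp_add_const x a).sub
      (hasDerivAt_polygamma n x hx)).div_const a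
  · cases n with
    | zero => simpa [polygamma] using (tendsto_digamma_add_sub ha).div_const a
    | succ n =>
      have h := tendsto_polygamma_succ n
      simpa using ((h.comp (tendsto_atTop_add_const_right atTop a tendsto_id)).sub h).div_const a

lemma deriv_digamma_add_one {x : ℝ} (hx : x ∈ Ioi 0) :
    deriv digamma (x + 1) = deriv digamma x - x⁻¹ * (x + 0)⁻¹ := by
  have hx0 : 0 < x := hx
  have hEq : (fun y => digamma (y + 1)) =ᶠ[𝓝 x] fun y => digamma y + y⁻¹ :=
    EqOn.eventuallyEq_of_mem (fun y hy => digamma_add_one hy) (isOpen_Ioi.mem_nhds hx)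
  rw [← deriv_comp_add_const, hEq.deriv_eq]
  refine HasDerivAt.deriv
    (((differentiableAt_digamma hx).hasDerivAt.add (hasDerivAt_inv hx0.ne')).congr_deriv ?_)
  rw [add_zero]
  ring

lemma Delta_comm (s t : ℝ) : Delta s t = Delta t s := by
  funext x
  simp only [Delta]
  rcases eq_or_ne s t with rfl | h
  · rfl
  · rw [if_neg h, if_neg h.symm, ← neg_sub t s, div_neg, ← neg_div, neg_sub, div_neg, ← neg_div,
      neg_sub]

lemma completelyMonotonicOn_mul_Delta {s t ε : ℝ} (hst : s ≤ t)
    (hε : 0 ≤ ε * (1 - (t - s) ^ 2)) :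
    CompletelyMonotonicOn (fun x => ε * Delta s t x) (Ioi (-s)) := by
  rcases hst.eq_or_lt with rfl | hlt
  · rw [sub_self] at hε
    have h := completelyMonotonicOn_sq_add_deriv le_rfl hε smoothVanishing_deriv_digamma
      fun x hx => deriv_digamma_add_one hx
    simpa [Delta] using h.comp_add_const (c := s)
  have ha : 0 < t - s := sub_pos.2 hlt
  have h := completelyMonotonicOn_sq_add_deriv ha.le hε (smoothVanishing_digamma_diff ha.le)
    fun x hx => ?_
  · refine (h.comp_add_const (c := s)).congr isOpen_Ioi fun x hx => ?_
    have hxs : 0 < x + s := by have := mem_Ioi.1 hx; linarith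
    have hd : deriv (fun y => (digamma (y + (t - s)) - digamma y) / (t - s)) (x + s) =
        (deriv digamma (x + t) - deriv digamma (x + s)) / (t - s) := by
      have hxt : x + s + (t - s) = x + t := by ring
      rw [← hxt]
      exact HasDerivAt.deriv
        ((((differentiableAt_digamma (mem_Ioi.2 (by positivity))).hasDerivAt.comp_add_const
          (x + s) (t - s)).sub (differentiableAt_digamma hxs).hasDerivAt).div_const (t - s))
    simp only [hd]
    rw [Delta, if_neg hlt.ne, show x + s + (t - s) = x + t by ring]
  · have hx0 : 0 < x := hx
    have hxa : 0 < x + (t - s) := by positivity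
    rw [add_right_comm, digamma_add_one hx, digamma_add_one hxa]
    field_simp
    ring

end Digamma

theorem qi_complete_monotonicity (s t : ℝ) :
    (|t - s| < 1 → CompletelyMonotonicOn (Delta s t) (Set.Ioi (-(min s t)))) ∧
      (1 < |t - s| →
        CompletelyMonotonicOn (fun x => -(Delta s t x)) (Set.Ioi (-(min s t)))) := by
  have key : ∀ ε : ℝ, 0 ≤ ε * (1 - (t - s) ^ 2) →
      CompletelyMonotonicOn (fun x => ε * Delta s t x) (Ioi (-(min s t))) := by
    intro ε hε
    rcases le_total s t with hst | hst
    · rw [min_eq_left hst]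
      exact completelyMonotonicOn_mul_Delta hst hε
    · rw [min_eq_right hst, Delta_comm]
      exact completelyMonotonicOn_mul_Delta hst (by rwa [← neg_sub t s, neg_sq])
  refine ⟨fun h => ?_, fun h => ?_⟩
  · have h2 := (sq_lt_one_iff_abs_lt_one (t - s)).2 h
    simpa using key 1 (by linarith)
  · have h2 := (one_lt_sq_iff_one_lt_abs (t - s)).2 h
    simpa using key (-1) (by linarith)
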